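/- Let N ≥ 1, let A be an N×N real matrix, and let v ∈ ℝ^N be such that (A^τ)_{i,j} → v_j as τ → ∞ for all pairs (i,j). Let w : ℕ → ℝ^N be a sequence such that for each j there is B_j with |w_{j,s}| ≤ B_j for all s, and such that for each j, (1/t) ∑_{s=0}^{t-1} w_{j,s} → c_j as t → ∞. Then for every i, lim_{t→∞} (1/t) ∑_{τ=1}^{t} ∑_{j=1}^N (A^τ)_{i,j} w_{j,t-τ} = ∑_{j=1}^N v_j c_j. -/

import Mathlib

open Filter Finset

/-!
Write `a τ = l + (a τ - l)`. The constant part contributes `L l` applied to the Cesàro mean of `w`,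
since reversing time only reorders the sum. In the remainder, boundedness of `w` removes the
dependence on `t - τ`, leaving a multiple of the mean of `‖a τ - l‖`, which tends to zero.
-/

open scoped Topology

section

variable {E F G : Type*} [SeminormedAddCommGroup E] [SeminormedAddCommGroup F]
  [SeminormedAddCommGroup G]

/-- Strong Cesàro convergence of `a` to `l`: the means of the distances `‖a τ - l‖` tend to zero.
The means run over `1 ≤ τ ≤ t`, the range of the averaged convolutions in which `a` is a weight. -/
def StrongCesaroTendsto (a : ℕ → E) (l : E) : Prop :=
  Tendsto (fun t : ℕ => (t : ℝ)⁻¹ * ∑ τ ∈ Icc 1 t, ‖a τ - l‖) atTop (𝓝 0)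

theorem StrongCesaroTendsto.of_tendsto {a : ℕ → E} {l : E} (ha : Tendsto a atTop (𝓝 l)) :
    StrongCesaroTendsto a l := by
  have dist_tendsto : Tendsto (fun k => ‖a (k + 1) - l‖) atTop (𝓝 0) :=
    (tendsto_iff_norm_sub_tendsto_zero.1 ha).comp (tendsto_add_atTop_nat 1)
  refine dist_tendsto.cesaro.congr fun t => ?_
  rw [range_eq_Ico, sum_Ico_add' (fun τ => ‖a τ - l‖), zero_add, Ico_add_one_right_eq_Icc]

theorem sum_Icc_one_comp_tsub {M : Type*} [AddCommMonoid M] (f : ℕ → M) (t : ℕ) :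
    ∑ τ ∈ Icc 1 t, f (t - τ) = ∑ s ∈ range t, f s := by
  refine sum_nbij' (t - ·) (t - ·) ?_ ?_ ?_ ?_ fun _ _ => rfl <;>
    simp only [mem_Icc, mem_range] <;> omega

variable [NormedSpace ℝ E] [NormedSpace ℝ F] [NormedSpace ℝ G] (L : E →L[ℝ] F →L[ℝ] G)

theorem norm_sum_Icc_bilin_le (a : ℕ → E) {w : ℕ → F} {B : ℝ} (hw : ∀ s, ‖w s‖ ≤ B) (t : ℕ) :
    ‖∑ τ ∈ Icc 1 t, L (a τ) (w (t - τ))‖ ≤ ‖L‖ * B * ∑ τ ∈ Icc 1 t, ‖a τ‖ := by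
  rw [mul_sum]
  refine norm_sum_le_of_le _ fun τ _ => ?_
  calc ‖L (a τ) (w (t - τ))‖ ≤ ‖L‖ * ‖a τ‖ * ‖w (t - τ)‖ := L.le_opNorm₂ _ _
    _ ≤ ‖L‖ * ‖a τ‖ * B := by gcongr; exact hw _
    _ = ‖L‖ * B * ‖a τ‖ := by ring

theorem StrongCesaroTendsto.tendsto_cesaro_bilin {a : ℕ → E} {l : E} (ha : StrongCesaroTendsto a l)
    {w : ℕ → F} {B : ℝ} (hw : ∀ s, ‖w s‖ ≤ B) {c : F}
    (hc : Tendsto (fun t : ℕ => (t : ℝ)⁻¹ • ∑ s ∈ range t, w s) atTop (𝓝 c)) :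
    Tendsto (fun t : ℕ => (t : ℝ)⁻¹ • ∑ τ ∈ Icc 1 t, L (a τ) (w (t - τ))) atTop (𝓝 (L l c)) := by
  have remainder_tendsto :
      Tendsto (fun t : ℕ => (t : ℝ)⁻¹ • ∑ τ ∈ Icc 1 t, L (a τ - l) (w (t - τ))) atTop (𝓝 0) := by
    refine squeeze_zero_norm (fun t => ?_) (by simpa only [mul_zero] using ha.const_mul (‖L‖ * B))
    rw [norm_smul, norm_inv, RCLike.norm_natCast, mul_left_comm]
    gcongr
    exact norm_sum_Icc_bilin_le L (a · - l) hw t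
  have constant_tendsto :
      Tendsto (fun t : ℕ => (t : ℝ)⁻¹ • ∑ τ ∈ Icc 1 t, L l (w (t - τ))) atTop (𝓝 (L l c)) := by
    refine (((L l).continuous.tendsto c).comp hc).congr fun t => ?_
    rw [sum_Icc_one_comp_tsub (fun s => L l (w s)), Function.comp_apply, map_smul, map_sum]
  have total_tendsto := remainder_tendsto.add constant_tendsto
  simpa only [← smul_add, ← sum_add_distrib, ← add_apply, ← map_add,
    sub_add_cancel, zero_add] using total_tendsto

theorem stmt_5_general {ι : Type*} [Fintype ι] {a : ℕ → ι → E} {v : ι → E}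
    (ha : ∀ j, StrongCesaroTendsto (a · j) (v j)) {w : ℕ → ι → F} {B : ι → ℝ}
    (hw_bdd : ∀ j s, ‖w s j‖ ≤ B j) {c : ι → F}
    (hw_cesaro : ∀ j, Tendsto (fun t : ℕ => (t : ℝ)⁻¹ • ∑ s ∈ range t, w s j) atTop (𝓝 (c j))) :
    Tendsto (fun t : ℕ => (t : ℝ)⁻¹ • ∑ τ ∈ Icc 1 t, ∑ j, L (a τ j) (w (t - τ) j))
      atTop (𝓝 (∑ j, L (v j) (c j))) := by
  have sum_tendsto := tendsto_finsetSum univ fun j _ =>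
    (ha j).tendsto_cesaro_bilin L (hw_bdd j) (hw_cesaro j)
  refine sum_tendsto.congr fun t => ?_
  rw [← smul_sum, sum_comm]

end

/-- Evaluation of the rate exponent (Equations (9)–(15)) in Theorem 1: if the matrix
powers of `A` converge entrywise to `v` and the increments `w` are bounded with Cesàro
means converging to `c`, then the weighted time-average converges to `∑ j, v j * c j`. -/
theorem stmt_5 (N : ℕ) (hN : 1 ≤ N) (A : Matrix (Fin N) (Fin N) ℝ)
    (v : Fin N → ℝ)
    (hv : ∀ i j, Tendsto (fun τ : ℕ => (A ^ τ) i j) atTop (nhds (v j)))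
    (w : ℕ → Fin N → ℝ) (B : Fin N → ℝ)
    (hw_bdd : ∀ j s, |w s j| ≤ B j)
    (c : Fin N → ℝ)
    (hw_cesaro : ∀ j, Tendsto (fun t : ℕ => (1 / (t : ℝ)) * ∑ s ∈ Finset.range t, w s j)
      atTop (nhds (c j))) :
    ∀ i, Tendsto
      (fun t : ℕ => (1 / (t : ℝ)) * ∑ τ ∈ Finset.Icc 1 t, ∑ j, (A ^ τ) i j * w (t - τ) j)
      atTop (nhds (∑ j, v j * c j)) := by
  simp only [one_div] at hw_cesaro ⊢
  exact fun i => stmt_5_general (.mul ℝ ℝ) (fun j => .of_tendsto (hv i j)) hw_bdd hw_cesaro
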